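/- Let θ ∈ (0,π), let d₁ > d₂ > ⋯ > d_s > 0 and t₁, …, t_s ≥ 1 be integers with Σ_{ℓ=1}^{s} t_ℓ·d_ℓ = n, and let A ∈ SL(n,ℍ) be conjugate in GL(n,ℍ) to the direct sum, over ℓ = 1,…,s, of t_ℓ copies of the Jordan block J(e^{iθ}, d_ℓ). Then A is strongly reversible in SL(n,ℍ) if and only if t_ℓ is even for all 1 ≤ ℓ ≤ s. -/

import Mathlib

set_option maxHeartbeats 1000000

noncomputable section

open Matrix

/-- The embedding of `ℂ` into the real quaternions, onto the subalgebra spanned by `1` and `i`. -/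
def C2H (z : ℂ) : Quaternion ℝ := ⟨z.re, z.im, 0, 0⟩

/-- For a quaternion `q = a + b i + c j + d k`, its first complex coordinate `a + b i`. -/
def qc1 (q : Quaternion ℝ) : ℂ := ⟨q.re, q.imI⟩

/-- For a quaternion `q = a + b i + c j + d k`, its second complex coordinate `c + d i`,
so that `q = qc1 q + (qc2 q) * j`. -/
def qc2 (q : Quaternion ℝ) : ℂ := ⟨q.imJ, q.imK⟩

/-- The embedding `Φ` of quaternionic square matrices into complex matrices of doubled size:
writing `A = A₁ + A₂ · j`, `Φ A` is the block matrix `[[A₁, A₂], [-conj A₂, conj A₁]]`. -/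
def Phi {m : Type*} (A : Matrix m m (Quaternion ℝ)) : Matrix (m ⊕ m) (m ⊕ m) ℂ :=
  Matrix.fromBlocks (A.map qc1) (A.map qc2)
    (-(A.map fun q => (starRingEnd ℂ) (qc2 q))) (A.map fun q => (starRingEnd ℂ) (qc1 q))

/-- The determinant of a quaternionic matrix `A`: the determinant of `Φ A`.
`A ∈ GL(n, ℍ)` means `qdet A ≠ 0`, and `A ∈ SL(n, ℍ)` means `qdet A = 1`. -/
def qdet {m : Type*} [Fintype m] [DecidableEq m] (A : Matrix m m (Quaternion ℝ)) : ℂ :=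
  (Phi A).det

/-- The `m × m` Jordan block `J(λ, m)` over `ℂ`: `λ` on the diagonal, `1` on the
superdiagonal, `0` elsewhere. -/
def jordanC (lam : ℂ) (m : ℕ) : Matrix (Fin m) (Fin m) ℂ :=
  Matrix.of fun i j => if (j : ℕ) = (i : ℕ) then lam else if (j : ℕ) = (i : ℕ) + 1 then 1 else 0

/-- The `m × m` Jordan block `J(λ, m)`, `λ ∈ ℂ`, viewed as a quaternionic matrix. -/
def jordanH (lam : ℂ) (m : ℕ) : Matrix (Fin m) (Fin m) (Quaternion ℝ) :=
  (jordanC lam m).map C2H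


/-- entrywise conjugate -/
def mconj {m n : Type*} (A : Matrix m n ℂ) : Matrix m n ℂ := A.map (starRingEnd ℂ)

/-- `z ↦ z * j` -/
def Cj (z : ℂ) : Quaternion ℝ := ⟨0, 0, z.re, z.im⟩

section basics

variable {m : Type*} [Fintype m] [DecidableEq m]

theorem mconj_mul (A B : Matrix m m ℂ) : mconj (A * B) = mconj A * mconj B := by
  simp [mconj, Matrix.map_mul]

theorem mconj_one : mconj (1 : Matrix m m ℂ) = 1 := by
  simp [mconj]

theorem mconj_mconj (A : Matrix m m ℂ) : mconj (mconj A) = A := by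
  ext i j; simp [mconj]

theorem qc1_sum {ι : Type*} (s : Finset ι) (f : ι → Quaternion ℝ) :
    qc1 (∑ i ∈ s, f i) = ∑ i ∈ s, qc1 (f i) := by
  let φ : Quaternion ℝ →+ ℂ :=
    { toFun := qc1
      map_zero' := by apply Complex.ext <;> rfl
      map_add' := fun a b => by apply Complex.ext <;> simp [qc1] }
  exact map_sum φ f s

theorem qc2_sum {ι : Type*} (s : Finset ι) (f : ι → Quaternion ℝ) :
    qc2 (∑ i ∈ s, f i) = ∑ i ∈ s, qc2 (f i) := by
  let φ : Quaternion ℝ →+ ℂ :=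
    { toFun := qc2
      map_zero' := by apply Complex.ext <;> rfl
      map_add' := fun a b => by apply Complex.ext <;> simp [qc2] }
  exact map_sum φ f s

theorem qc1_mul (a b : Quaternion ℝ) :
    qc1 (a * b) = qc1 a * qc1 b - qc2 a * (starRingEnd ℂ) (qc2 b) := by
  apply Complex.ext <;> simp [qc1, qc2] <;> ring

theorem qc2_mul (a b : Quaternion ℝ) :
    qc2 (a * b) = qc1 a * qc2 b + qc2 a * (starRingEnd ℂ) (qc1 b) := by
  apply Complex.ext <;> simp [qc1, qc2] <;> ring

theorem map_qc1_mul (A B : Matrix m m (Quaternion ℝ)) :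
    (A * B).map qc1 = A.map qc1 * B.map qc1 - A.map qc2 * mconj (B.map qc2) := by
  ext i j
  simp [Matrix.mul_apply, qc1_sum, qc1_mul, mconj, Finset.sum_sub_distrib]

theorem map_qc2_mul (A B : Matrix m m (Quaternion ℝ)) :
    (A * B).map qc2 = A.map qc1 * B.map qc2 + A.map qc2 * mconj (B.map qc1) := by
  ext i j
  simp [Matrix.mul_apply, qc2_sum, qc2_mul, mconj, Finset.sum_add_distrib]

theorem qmat_ext {A B : Matrix m m (Quaternion ℝ)} (h1 : A.map qc1 = B.map qc1)
    (h2 : A.map qc2 = B.map qc2) : A = B := by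
  ext i j
  all_goals
    have a1 := congrFun (congrFun h1 i) j
    have a2 := congrFun (congrFun h2 i) j
    simp only [Matrix.map_apply, qc1, qc2, Complex.mk.injEq] at a1 a2
    first | exact a1.1 | exact a1.2 | exact a2.1 | exact a2.2

theorem Phi_eq (A : Matrix m m (Quaternion ℝ)) :
    Phi A = Matrix.fromBlocks (A.map qc1) (A.map qc2) (-mconj (A.map qc2)) (mconj (A.map qc1)) := by
  simp only [Phi, mconj, Matrix.map_map]
  rfl

theorem mconj_add (A B : Matrix m m ℂ) : mconj (A + B) = mconj A + mconj B := by
  ext i j; simp [mconj]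

theorem mconj_sub (A B : Matrix m m ℂ) : mconj (A - B) = mconj A - mconj B := by
  ext i j; simp [mconj]

theorem Phi_mul (A B : Matrix m m (Quaternion ℝ)) : Phi (A * B) = Phi A * Phi B := by
  simp only [Phi_eq, Matrix.fromBlocks_multiply, map_qc1_mul, map_qc2_mul, mconj_add, mconj_sub,
    mconj_mul, mconj_mconj]
  congr 1
  · simp [sub_eq_add_neg]
  · simp [sub_eq_add_neg, add_comm]
  · simp [sub_eq_add_neg, add_comm]

theorem Phi_one : Phi (1 : Matrix m m (Quaternion ℝ)) = 1 := by
  have h1 : (1 : Matrix m m (Quaternion ℝ)).map qc1 = 1 := by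
    ext i j
    by_cases h : i = j
    · subst h; apply Complex.ext <;> simp [qc1] <;> rfl
    · apply Complex.ext <;> simp [qc1, h] <;> rfl
  have h2 : (1 : Matrix m m (Quaternion ℝ)).map qc2 = 0 := by
    ext i j
    by_cases h : i = j
    · subst h; apply Complex.ext <;> simp [qc2] <;> rfl
    · apply Complex.ext <;> simp [qc2, h] <;> rfl
  rw [Phi_eq, h1, h2, mconj_one]
  simp [mconj]

theorem qdet_mul (A B : Matrix m m (Quaternion ℝ)) : qdet (A * B) = qdet A * qdet B := by
  simp [qdet, Phi_mul]

theorem qdet_one : qdet (1 : Matrix m m (Quaternion ℝ)) = 1 := by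
  simp [qdet, Phi_one]

theorem det_skew (Y Z : Matrix m m ℂ) :
    (Matrix.fromBlocks 0 Y (-Z) 0).det = Y.det * Z.det := by
  have : Matrix.fromBlocks 0 Y (-Z) 0 =
      Matrix.fromBlocks Y 0 0 Z * (Matrix.fromBlocks 1 1 0 1 * Matrix.fromBlocks 1 0 (-1) 1 *
        Matrix.fromBlocks 1 1 0 1) := by
    simp [Matrix.fromBlocks_multiply]
  rw [this]
  simp only [Matrix.det_mul, Matrix.det_fromBlocks_zero₂₁, Matrix.det_fromBlocks_zero₁₂]
  simp

/-- parity from a quaternionic structure -/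
theorem even_card_of_mconj (Y : Matrix m m ℂ) (h : Y * mconj Y = -1) :
    Even (Fintype.card m) := by
  have h1 := congrArg Matrix.det h
  have h2 : (mconj Y).det = (starRingEnd ℂ) Y.det := by
    rw [RingHom.map_det]; rfl
  rw [Matrix.det_mul, h2, Complex.mul_conj, Matrix.det_neg, Matrix.det_one, mul_one] at h1
  by_contra hne
  rw [Nat.not_even_iff_odd] at hne
  rw [hne.neg_one_pow] at h1
  have h3 := congrArg Complex.re h1
  simp at h3
  have := Complex.normSq_nonneg Y.det
  linarith

end basics

section forward

variable {P : Type*} [Fintype P] [DecidableEq P] (D : P → ℕ) (lam : ℂ)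

/-- block diagonal Jordan matrix -/
def JJ : Matrix ((p : P) × Fin (D p)) ((p : P) × Fin (D p)) ℂ :=
  Matrix.blockDiagonal' fun p => jordanC lam (D p)

/-- the nilpotent part as an operator on vectors -/
def NN (v : ((p : P) × Fin (D p)) → ℂ) : ((p : P) × Fin (D p)) → ℂ :=
  fun x => if h : x.2.val + 1 < D x.1 then v ⟨x.1, ⟨x.2.val + 1, h⟩⟩ else 0

/-- filtration -/
def WW (k : ℕ) (v : ((p : P) × Fin (D p)) → ℂ) : Prop := ∀ x, k ≤ x.2.val → v x = 0

theorem jordanC_mulVec (m : ℕ) (v : Fin m → ℂ) (i : Fin m) :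
    (jordanC lam m).mulVec v i = lam * v i + if h : i.val + 1 < m then v ⟨i.val + 1, h⟩ else 0 := by
  have : ∀ j : Fin m, jordanC lam m i j * v j = (if j = i then lam * v j else 0) +
      (if j.val = i.val + 1 then v j else 0) := by
    intro j
    simp only [jordanC, Matrix.of_apply, Fin.ext_iff]
    split_ifs <;> first | omega | simp
  simp only [Matrix.mulVec, dotProduct, this, Finset.sum_add_distrib]
  simp only [Finset.sum_ite_eq', Finset.mem_univ, if_true]
  congr 1
  split_ifs with h
  · rw [Finset.sum_eq_single ⟨i.val + 1, h⟩]
    · simp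
    · intro b _ hb
      rw [if_neg]
      intro h'; apply hb; ext; exact h'
    · simp
  · apply Finset.sum_eq_zero
    intro j _
    rw [if_neg]
    have := j.isLt
    omega

theorem JJ_mulVec (v : ((p : P) × Fin (D p)) → ℂ) :
    (JJ D lam).mulVec v = lam • v + NN D v := by
  ext ⟨p, i⟩
  have : (JJ D lam).mulVec v ⟨p, i⟩ = (jordanC lam (D p)).mulVec (fun j => v ⟨p, j⟩) i := by
    simp only [Matrix.mulVec, dotProduct, JJ]
    rw [Fintype.sum_sigma, Finset.sum_eq_single p]
    · simp
    · intro q _ hq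
      apply Finset.sum_eq_zero
      intro j _
      rw [Matrix.blockDiagonal'_apply_ne _ _ _ (Ne.symm hq), zero_mul]
    · simp
  rw [this, jordanC_mulVec]
  rfl

theorem WW_succ (k : ℕ) (v : ((p : P) × Fin (D p)) → ℂ) : WW D (k + 1) v ↔ WW D k (NN D v) := by
  constructor
  · rintro h ⟨p, i⟩ hi
    simp only [NN]
    split_ifs with h'
    · exact h _ (by simpa using hi)
    · rfl
  · rintro h ⟨p, i, hi'⟩ hi
    simp only at hi
    obtain ⟨i', rfl⟩ : ∃ i', i = i' + 1 := ⟨i - 1, by omega⟩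
    have := h ⟨p, ⟨i', by omega⟩⟩ (by simp; omega)
    simpa [NN, hi'] using this

theorem WW_mono {k l : ℕ} (h : k ≤ l) {v : ((p : P) × Fin (D p)) → ℂ} (hv : WW D k v) :
    WW D l v := fun x hx => hv x (h.trans hx)

theorem WW_JJ {k : ℕ} {v : ((p : P) × Fin (D p)) → ℂ} (hv : WW D k v) :
    WW D k ((JJ D lam).mulVec v) := by
  have := (WW_succ D k v).1 (WW_mono D (Nat.le_succ k) hv)
  rw [JJ_mulVec]
  intro x hx
  simp [hv x hx, this x hx]

theorem WW_smul {k : ℕ} {v : ((p : P) × Fin (D p)) → ℂ} (c : ℂ) (hv : WW D k v) :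
    WW D k (c • v) := by
  intro x hx
  simp [hv x hx]

theorem WW_zero {v : ((p : P) × Fin (D p)) → ℂ} : WW D 0 v ↔ v = 0 := by
  constructor
  · intro h; ext x; exact h x (Nat.zero_le _)
  · rintro rfl x _; rfl

theorem WW_top : ∃ K, ∀ v : ((p : P) × Fin (D p)) → ℂ, WW D K v := by
  refine ⟨∑ p, D p, fun v x hx => ?_⟩
  have h1 := x.2.isLt
  have h2 := Finset.single_le_sum (f := D) (fun _ _ => Nat.zero_le _) (Finset.mem_univ x.1)
  omega

/-- `J X J = X` forces `X = 0` -/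
theorem X_eq_zero (hl : lam * lam ≠ 1)
    (X : Matrix ((p : P) × Fin (D p)) ((p : P) × Fin (D p)) ℂ)
    (hX : JJ D lam * X * JJ D lam = X) : X = 0 := by
  obtain ⟨K, hK⟩ := WW_top D
  have key : ∀ k v, WW D k v → X.mulVec v = 0 := by
    intro k
    induction k with
    | zero => intro v hv; rw [(WW_zero D).1 hv]; simp
    | succ k ih =>
      intro v hv
      have h0 := ih _ ((WW_succ D k v).1 hv)
      have h1 : (JJ D lam).mulVec (X.mulVec ((JJ D lam).mulVec v)) = X.mulVec v := by
        rw [Matrix.mulVec_mulVec, Matrix.mulVec_mulVec, hX]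
      rw [JJ_mulVec D lam v, Matrix.mulVec_add, h0, add_zero, Matrix.mulVec_smul,
        Matrix.mulVec_smul, JJ_mulVec] at h1
      have hd : ∀ k, WW D k (X.mulVec v) → X.mulVec v = 0 := by
        intro k
        induction k with
        | zero => exact (WW_zero D).1
        | succ k ih' =>
          intro hk
          apply ih'
          have hk2 := (WW_succ D k _).1 hk
          intro x hx
          have h3 := congrFun h1 x
          simp [hk2 x hx] at h3
          have : (lam * lam - 1) * X.mulVec v x = 0 := by linear_combination h3
          rcases mul_eq_zero.1 this with h | h
          · exact absurd (sub_eq_zero.1 h) hl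
          · exact h
      exact hd K (hK _)
  ext i j
  have := congrFun (key K (Pi.single j 1) (hK _)) i
  simpa using this

theorem Y_pres (hl : lam * (starRingEnd ℂ) lam = 1)
    (Y : Matrix ((p : P) × Fin (D p)) ((p : P) × Fin (D p)) ℂ)
    (hY : JJ D lam * Y * mconj (JJ D lam) = Y) (k : ℕ) :
    ∀ v, WW D k v → WW D k (Y.mulVec (star v)) := by
  induction k with
  | zero => intro v hv; rw [(WW_zero D).1 hv]; simp [WW_zero]
  | succ k ih =>
    intro v hv
    have h0 := ih _ ((WW_succ D k v).1 hv)
    rw [WW_succ]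
    have hs : star ((JJ D lam).mulVec v) = (mconj (JJ D lam)).mulVec (star v) := by
      ext i
      simp [Matrix.mulVec, dotProduct, mconj]
    have h1 : (JJ D lam).mulVec (Y.mulVec (star ((JJ D lam).mulVec v))) = Y.mulVec (star v) := by
      rw [hs, Matrix.mulVec_mulVec, Matrix.mulVec_mulVec, hY]
    rw [JJ_mulVec D lam v, star_add, star_smul, Matrix.mulVec_add, Matrix.mulVec_add,
      Matrix.mulVec_smul, Matrix.mulVec_smul, JJ_mulVec] at h1
    have h2 : NN D (Y.mulVec (star v)) =
        (-lam) • (JJ D lam).mulVec (Y.mulVec (star (NN D v))) := by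
      ext x
      have h3 := congrFun h1 x
      simp only [Pi.add_apply, Pi.smul_apply, smul_eq_mul, Complex.star_def] at h3 ⊢
      linear_combination lam * h3 - (NN D (Y.mulVec (star v)) x + lam * Y.mulVec (star v) x) * hl
    rw [h2]
    exact WW_smul D _ (WW_JJ D lam h0)

theorem even_card_filt (hl : lam * (starRingEnd ℂ) lam = 1)
    (Y : Matrix ((p : P) × Fin (D p)) ((p : P) × Fin (D p)) ℂ)
    (hY : JJ D lam * Y * mconj (JJ D lam) = Y) (hYY : Y * mconj Y = -1) (k : ℕ) :
    Even (∑ p, min (D p) k) := by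
  have hz : ∀ x y : (p : P) × Fin (D p), y.2.val < k → k ≤ x.2.val → Y x y = 0 := by
    intro x y hy hx
    have := Y_pres D lam hl Y hY k (Pi.single y 1) (by
      intro z hz
      rw [Pi.single_apply, if_neg]
      rintro rfl; omega) x hx
    have hs : star (Pi.single y 1 : ((p : P) × Fin (D p)) → ℂ) = Pi.single y 1 := by
      ext z; simp only [Pi.star_apply, Pi.single_apply]; split_ifs <;> simp
    rw [hs] at this
    simpa using this
  let q : ((p : P) × Fin (D p)) → Prop := fun x => x.2.val < k
  let Yk : Matrix {x // q x} {x // q x} ℂ := Y.submatrix Subtype.val Subtype.val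
  have hYk : Yk * mconj Yk = -1 := by
    ext x y
    have h := congrFun (congrFun hYY x.1) y.1
    rw [Matrix.mul_apply] at h
    have h2 : ∑ z, Y x.1 z * mconj Y z y.1 = ∑ z : {x // q x}, Y x.1 z.1 * mconj Y z.1 y.1 := by
      rw [← Fintype.sum_subtype_add_sum_subtype q (fun z => Y x.1 z * mconj Y z y.1)]
      rw [add_eq_left]
      apply Finset.sum_eq_zero
      rintro ⟨z, hzq⟩ _
      have : Y z y.1 = 0 := hz z y.1 y.2 (not_lt.1 hzq)
      simp [mconj, this]
    rw [Matrix.mul_apply]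
    rw [h2] at h
    refine Eq.trans h ?_
    simp [Matrix.one_apply, Subtype.ext_iff]
  have h := even_card_of_mconj Yk hYk
  have hc : Fintype.card {x // q x} = ∑ p, min (D p) k := by
    have e : {x // q x} ≃ (p : P) × Fin (min (D p) k) :=
      { toFun := fun x => ⟨x.1.1, ⟨x.1.2.val, lt_min x.1.2.isLt x.2⟩⟩
        invFun := fun y => ⟨⟨y.1, ⟨y.2.val, (lt_min_iff.1 y.2.isLt).1⟩⟩, (lt_min_iff.1 y.2.isLt).2⟩
        left_inv := fun x => rfl
        right_inv := fun y => rfl }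
    rw [Fintype.card_congr e]
    simp
  rwa [hc] at h

end forward

section backward

theorem Npow_apply (m k : ℕ) (i j : Fin m) :
    (jordanC 0 m ^ k) i j = if j.val = i.val + k then 1 else 0 := by
  induction k generalizing i with
  | zero => simp [Matrix.one_apply, Fin.ext_iff, eq_comm]
  | succ k ih =>
    rw [pow_succ']
    have h := jordanC_mulVec 0 m (fun l => (jordanC 0 m ^ k) l j) i
    have h2 : (jordanC 0 m * jordanC 0 m ^ k) i j =
      (jordanC 0 m).mulVec (fun l => (jordanC 0 m ^ k) l j) i := rfl
    rw [h2, h]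
    have := j.isLt
    split_ifs with h3 h4 h4
    · rw [zero_mul, zero_add, ih]; exact if_pos (by show j.val = i.val + 1 + k; omega)
    · rw [zero_mul, zero_add, ih]; exact if_neg (by show ¬ j.val = i.val + 1 + k; omega)
    · omega
    · simp

theorem jordanC_eq (lam : ℂ) (m : ℕ) :
    jordanC lam m = lam • (1 : Matrix (Fin m) (Fin m) ℂ) + jordanC 0 m := by
  ext i j
  simp only [jordanC, Matrix.of_apply, Matrix.add_apply, Matrix.smul_apply, Matrix.one_apply,
    Fin.ext_iff, smul_eq_mul, eq_comm]
  split_ifs <;> simp_all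

theorem mconj_jordanC (lam : ℂ) (m : ℕ) :
    mconj (jordanC lam m) = jordanC ((starRingEnd ℂ) lam) m := by
  ext i j
  simp only [jordanC, Matrix.of_apply, mconj, Matrix.map_apply]
  split_ifs <;> simp

theorem det_jordanC (lam : ℂ) (m : ℕ) : (jordanC lam m).det = lam ^ m := by
  rw [Matrix.det_of_isUpperTriangular]
  · simp [jordanC]
  · intro i j hij
    simp only [id] at hij
    have : j.val < i.val := hij
    simp only [jordanC, Matrix.of_apply]
    rw [if_neg (by omega), if_neg (by omega)]

theorem eq_one_of_commute (m : ℕ) (C : Matrix (Fin (m + 1)) (Fin (m + 1)) ℂ)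
    (hC : Commute C (jordanC 0 (m + 1)))
    (hu : ∀ i, C i (Fin.last m) = if i = Fin.last m then 1 else 0) : C = 1 := by
  ext i j
  have h := (hC.pow_right (m - j.val)).eq
  have h1 := congrFun (congrFun h i) (Fin.last m)
  have hj := j.isLt
  rw [Matrix.mul_apply, Matrix.mul_apply] at h1
  simp only [Npow_apply, hu, Fin.val_last] at h1
  rw [Finset.sum_eq_single j, Finset.sum_eq_single (Fin.last m)] at h1
  · rw [if_pos (by omega)] at h1
    simp only [mul_one, if_true, Fin.val_last] at h1
    rw [h1, Matrix.one_apply]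
    simp only [Fin.ext_iff]
    split_ifs <;> first | rfl | omega
  · intro b _ hb; simp [hb]
  · simp
  · intro b _ hb
    rw [if_neg, mul_zero]
    intro h'; apply hb; ext; omega
  · simp

theorem exists_Z (m : ℕ) (lam : ℂ) (hl : lam * (starRingEnd ℂ) lam = 1) :
    ∃ Z : Matrix (Fin (m + 1)) (Fin (m + 1)) ℂ,
      jordanC lam (m + 1) * Z * mconj (jordanC lam (m + 1)) = Z ∧ Z * mconj Z = 1 := by
  set mu := (starRingEnd ℂ) lam with hmu
  set N := jordanC 0 (m + 1) with hN
  set J := jordanC lam (m + 1) with hJ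
  have hl0 : lam ≠ 0 := by rintro rfl; simp at hl
  have hJu : IsUnit J.det := by rw [hJ, det_jordanC]; exact (isUnit_iff_ne_zero.2 hl0).pow _
  have hJN : J = lam • 1 + N := jordanC_eq lam (m + 1)
  have hJc : mconj J = mu • 1 + N := by rw [hJ, mconj_jordanC, jordanC_eq]
  have hR1 : J * J⁻¹ = 1 := Matrix.mul_nonsing_inv J hJu
  have hR2 : J⁻¹ * J = 1 := Matrix.nonsing_inv_mul J hJu
  set R := J⁻¹ with hR
  have hcJN : Commute J N := by
    rw [hJN]; exact ((Commute.one_left N).smul_left lam).add_left (Commute.refl N)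
  have hcRN : Commute R N := by
    have h : R * (N * J) * R = R * (J * N) * R := by rw [hcJN.eq]
    calc R * N = R * N * (J * R) := by rw [hR1, mul_one]
      _ = R * (N * J) * R := by simp only [mul_assoc]
      _ = R * (J * N) * R := h
      _ = (R * J) * N * R := by simp only [mul_assoc]
      _ = N * R := by rw [hR2, one_mul]
  set M := (-mu) • R * N with hM
  have hM1 : mu • 1 + M = R := by
    have : N = J - lam • 1 := by rw [hJN]; abel
    rw [hM, this, mul_sub, smul_mul_assoc, hR2, smul_mul_assoc, mul_smul_comm, mul_one, smul_smul]
    have h2 : -mu * lam = -1 := by linear_combination -hl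
    rw [h2]
    simp
  have hN0 : N ^ (m + 1) = 0 := by
    ext i j
    rw [hN, Npow_apply, if_neg (by have := j.isLt; omega)]; rfl
  have hM0 : M ^ (m + 1) = 0 := by
    rw [hM, (hcRN.smul_left (-mu)).mul_pow, hN0, mul_zero]
  let Z : Matrix (Fin (m + 1)) (Fin (m + 1)) ℂ :=
    Matrix.of fun i j => (M ^ (m - j.val)) i (Fin.last m)
  have hZN : Z * N = M * Z := by
    ext i j
    have h2 : (M * Z) i j = (M ^ (m - j.val + 1)) i (Fin.last m) := by
      rw [pow_succ', Matrix.mul_apply, Matrix.mul_apply]; rfl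
    rw [h2, Matrix.mul_apply]
    have hNa : ∀ l, N l j = if j.val = l.val + 1 then 1 else 0 := by
      intro l; rw [hN, ← pow_one (jordanC 0 (m + 1)), Npow_apply]
    simp only [hNa]
    have hj := j.isLt
    by_cases h0 : j.val = 0
    · rw [h0, Nat.sub_zero, hM0]
      apply Finset.sum_eq_zero
      intro l _
      rw [if_neg (by omega), mul_zero]
    · rw [Finset.sum_eq_single ⟨j.val - 1, by omega⟩]
      · simp only [Z, Matrix.of_apply]
        rw [if_pos (by omega), mul_one]
        have h5 : m - (j.val - 1) = m - j.val + 1 := by omega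
        rw [h5]
      · intro b _ hb
        rw [if_neg, mul_zero]
        intro h'; apply hb; ext; simp; omega
      · simp
  have hmain : J * Z * mconj J = Z := by
    rw [hJc, mul_assoc, mul_add, hZN, mul_smul_comm, mul_one]
    have : mu • Z + M * Z = R * Z := by
      rw [← hM1, add_mul, smul_mul_assoc, one_mul]
    rw [this, ← mul_assoc, hR1, one_mul]
  refine ⟨Z, hmain, ?_⟩
  have hmain' : mconj J * mconj Z * J = mconj Z := by
    have := congrArg mconj hmain
    rwa [mconj_mul, mconj_mul, mconj_mconj] at this
  have hcom : Commute (Z * mconj Z) J := by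
    show Z * mconj Z * J = J * (Z * mconj Z)
    calc Z * mconj Z * J = (J * Z * mconj J) * mconj Z * J := by rw [hmain]
      _ = J * Z * (mconj J * mconj Z * J) := by simp only [mul_assoc]
      _ = J * (Z * mconj Z) := by rw [hmain', mul_assoc]
  apply eq_one_of_commute
  · have : jordanC 0 (m + 1) = J - lam • 1 := by rw [hJN, hN]; abel
    rw [this]
    exact hcom.sub_right ((Commute.one_right _).smul_right lam)
  · intro i
    have hZl : ∀ l, Z l (Fin.last m) = if l = Fin.last m then 1 else 0 := by
      intro l; simp [Z, Matrix.one_apply]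
    have hZl' : ∀ l, mconj Z l (Fin.last m) = if l = Fin.last m then 1 else 0 := by
      intro l; simp only [mconj, Matrix.map_apply, hZl]; split_ifs <;> simp
    rw [Matrix.mul_apply]
    simp [hZl', hZl]

theorem exists_E (t : ℕ) (ht : Even t) : ∃ E : Matrix (Fin t) (Fin t) ℂ, E * mconj E = -1 := by
  obtain ⟨r, rfl⟩ := ht
  let E0 : Matrix (Fin r ⊕ Fin r) (Fin r ⊕ Fin r) ℂ := Matrix.fromBlocks 0 1 (-1) 0
  have h0 : E0 * E0 = -1 := by
    simp only [E0, Matrix.fromBlocks_multiply]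
    rw [← Matrix.fromBlocks_one, Matrix.fromBlocks_neg]
    simp
  have hc : mconj E0 = E0 := by
    ext i j
    rcases i with i | i <;> rcases j with j | j <;>
      simp [E0, mconj, Matrix.one_apply]
  let e : Fin (r + r) ≃ Fin r ⊕ Fin r := finSumFinEquiv.symm
  refine ⟨E0.submatrix e e, ?_⟩
  have : mconj (E0.submatrix e e) = E0.submatrix e e := by
    conv_rhs => rw [← hc]
    rfl
  rw [this, Matrix.submatrix_mul_equiv, h0]
  ext i j
  simp [Matrix.one_apply]

theorem exists_Y (s : ℕ) (d t : Fin s → ℕ) (hdpos : ∀ l, 1 ≤ d l) (ht : ∀ l, Even (t l)) (lam : ℂ)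
    (hl : lam * (starRingEnd ℂ) lam = 1) :
    ∃ Y : Matrix ((p : (l : Fin s) × Fin (t l)) × Fin (d p.1))
        ((p : (l : Fin s) × Fin (t l)) × Fin (d p.1)) ℂ,
      JJ (fun p : (l : Fin s) × Fin (t l) => d p.1) lam * Y *
        mconj (JJ (fun p : (l : Fin s) × Fin (t l) => d p.1) lam) = Y ∧ Y * mconj Y = -1 := by
  have hZ : ∀ l, ∃ Z : Matrix (Fin (d l)) (Fin (d l)) ℂ,
      jordanC lam (d l) * Z * mconj (jordanC lam (d l)) = Z ∧ Z * mconj Z = 1 := by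
    intro l
    obtain ⟨m, hm⟩ : ∃ m, d l = m + 1 := ⟨d l - 1, by have := hdpos l; omega⟩
    rw [hm]
    exact exists_Z m lam hl
  choose Z hZ1 hZ2 using hZ
  choose E hE using fun l => exists_E (t l) (ht l)
  let e : ((p : (l : Fin s) × Fin (t l)) × Fin (d p.1)) ≃ ((l : Fin s) × (Fin (t l) × Fin (d l))) :=
    { toFun := fun x => ⟨x.1.1, (x.1.2, x.2)⟩
      invFun := fun y => ⟨⟨y.1, y.2.1⟩, y.2.2⟩
      left_inv := fun x => rfl
      right_inv := fun y => rfl }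
  let JK : Matrix ((l : Fin s) × (Fin (t l) × Fin (d l))) ((l : Fin s) × (Fin (t l) × Fin (d l))) ℂ :=
    Matrix.blockDiagonal' fun l =>
      Matrix.kroneckerMap (· * ·) (1 : Matrix (Fin (t l)) (Fin (t l)) ℂ) (jordanC lam (d l))
  have hJ : JJ (fun p : (l : Fin s) × Fin (t l) => d p.1) lam = JK.submatrix e e := by
    ext ⟨⟨l, a⟩, i⟩ ⟨⟨l', b⟩, j⟩
    simp only [JJ, JK, Matrix.submatrix_apply, e, Equiv.coe_fn_mk]
    by_cases h : l = l'
    · subst h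
      rw [Matrix.blockDiagonal'_apply_eq, Matrix.kroneckerMap_apply]
      by_cases h' : a = b
      · subst h'
        rw [Matrix.blockDiagonal'_apply_eq]
        simp
      · rw [Matrix.blockDiagonal'_apply_ne]
        · simp [h']
        · simpa using h'
    · rw [Matrix.blockDiagonal'_apply_ne _ _ _ h, Matrix.blockDiagonal'_apply_ne]
      intro h'; exact h (congrArg Sigma.fst h')
  let YK : Matrix ((l : Fin s) × (Fin (t l) × Fin (d l))) ((l : Fin s) × (Fin (t l) × Fin (d l))) ℂ :=
    Matrix.blockDiagonal' fun l => Matrix.kroneckerMap (· * ·) (E l) (Z l)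
  have hbc : ∀ F : ∀ l, Matrix (Fin (t l) × Fin (d l)) (Fin (t l) × Fin (d l)) ℂ,
      mconj (Matrix.blockDiagonal' F) = Matrix.blockDiagonal' fun l => mconj (F l) := by
    intro F
    exact Matrix.blockDiagonal'_map F _ (map_zero _)
  have hkc : ∀ (a b : ℕ) (F : Matrix (Fin a) (Fin a) ℂ) (G : Matrix (Fin b) (Fin b) ℂ),
      mconj (Matrix.kroneckerMap (· * ·) F G) =
        Matrix.kroneckerMap (· * ·) (mconj F) (mconj G) := by
    intro a b F G
    ext x y
    simp [mconj]
  have h1 : JK * YK * mconj JK = YK := by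
    simp only [JK, YK, hbc, hkc, ← Matrix.blockDiagonal'_mul, ← Matrix.mul_kronecker_mul, mconj_one,
      one_mul, mul_one, hZ1]
  have h2 : YK * mconj YK = -1 := by
    simp only [YK, hbc, hkc, ← Matrix.blockDiagonal'_mul, ← Matrix.mul_kronecker_mul, hE, hZ2]
    rw [← Matrix.blockDiagonal'_one, ← Matrix.blockDiagonal'_neg]
    congr 1
    ext l x y
    simp [Matrix.one_apply, Prod.ext_iff]
    split_ifs <;> simp_all
  have hsc : ∀ F : Matrix ((l : Fin s) × (Fin (t l) × Fin (d l)))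
      ((l : Fin s) × (Fin (t l) × Fin (d l))) ℂ,
      mconj (F.submatrix e e) = (mconj F).submatrix e e := fun F => rfl
  refine ⟨YK.submatrix e e, ?_, ?_⟩
  · rw [hJ, hsc, Matrix.submatrix_mul_equiv, Matrix.submatrix_mul_equiv, h1]
  · rw [hsc, Matrix.submatrix_mul_equiv, h2]
    ext i j
    simp [Matrix.one_apply]

end backward

section assembly

variable {m : Type*} [Fintype m] [DecidableEq m]

theorem map_C2H_qc1 (A : Matrix m m ℂ) : (A.map C2H).map qc1 = A := by
  ext i j; rfl

theorem map_C2H_qc2 (A : Matrix m m ℂ) : (A.map C2H).map qc2 = 0 := by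
  ext i j; rfl

theorem map_Cj_qc1 (A : Matrix m m ℂ) : (A.map Cj).map qc1 = 0 := by
  ext i j; rfl

theorem map_Cj_qc2 (A : Matrix m m ℂ) : (A.map Cj).map qc2 = A := by
  ext i j; rfl

theorem one_qc1 : (1 : Matrix m m (Quaternion ℝ)).map qc1 = 1 := by
  have := Phi_one (m := m)
  rw [Phi_eq, ← Matrix.fromBlocks_one] at this
  exact (Matrix.fromBlocks_inj.1 this).1

theorem one_qc2 : (1 : Matrix m m (Quaternion ℝ)).map qc2 = 0 := by
  have := Phi_one (m := m)
  rw [Phi_eq, ← Matrix.fromBlocks_one] at this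
  exact (Matrix.fromBlocks_inj.1 this).2.1

theorem mconj_zero : mconj (0 : Matrix m m ℂ) = 0 := by
  ext i j; simp [mconj]

theorem JHJ_qc1 (J : Matrix m m ℂ) (H : Matrix m m (Quaternion ℝ)) :
    (J.map C2H * H * J.map C2H).map qc1 = J * H.map qc1 * J := by
  simp [-Matrix.map_map, map_qc1_mul, map_qc2_mul, map_C2H_qc1, map_C2H_qc2, mconj_zero]

theorem JHJ_qc2 (J : Matrix m m ℂ) (H : Matrix m m (Quaternion ℝ)) :
    (J.map C2H * H * J.map C2H).map qc2 = J * H.map qc2 * mconj J := by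
  simp [-Matrix.map_map, map_qc2_mul, map_C2H_qc1, map_C2H_qc2]

theorem even_of_second_diff (s : ℕ) (d t : Fin s → ℕ) (hd : Function.Injective d)
    (hdpos : ∀ l, 1 ≤ d l) (h : ∀ k, Even (∑ l, t l * min (d l) k)) (l : Fin s) : Even (t l) := by
  have h1 := h (d l - 1)
  have h2 := h (d l + 1)
  have h3 := h (d l)
  have key : ∑ x, t x * min (d x) (d l - 1) + ∑ x, t x * min (d x) (d l + 1) + t l =
      2 * ∑ x, t x * min (d x) (d l) := by
    have : t l = ∑ x, if x = l then t x else 0 := by simp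
    rw [this, ← Finset.sum_add_distrib, ← Finset.sum_add_distrib, Finset.mul_sum]
    apply Finset.sum_congr rfl
    intro x _
    have hl := hdpos l
    by_cases hx : x = l
    · subst hx
      rw [if_pos rfl]
      have e1 : min (d x) (d x - 1) = d x - 1 := by omega
      have e2 : min (d x) (d x + 1) = d x := by omega
      rw [e1, e2, min_self]
      obtain ⟨c, hc⟩ : ∃ c, d x = c + 1 := ⟨d x - 1, by omega⟩
      rw [hc]; simp; ring
    · rw [if_neg hx, add_zero, ← mul_add]
      have hne : d x ≠ d l := fun h' => hx (hd h')
      have : min (d x) (d l - 1) + min (d x) (d l + 1) = 2 * min (d x) (d l) := by omega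
      rw [this]; ring
  have h4 : Even (∑ x, t x * min (d x) (d l - 1) + ∑ x, t x * min (d x) (d l + 1) + t l) := by
    rw [key]; exact even_two_mul _
  exact (Nat.even_add.1 h4).1 (h1.add h2)

end assembly

/-- Let `θ ∈ (0, π)` and let `A ∈ SL(n, ℍ)` have Jordan form consisting, for each
`ℓ = 1, …, s`, of `t ℓ` copies of `J(e^{iθ}, d ℓ)`, where `d 1 > ⋯ > d s > 0` and
`∑ t ℓ * d ℓ = n`.  Then `A` is strongly reversible in `SL(n, ℍ)` iff every `t ℓ` is even. -/
theorem stronglyReversible_single_unit_eigenvalue_iff (n s : ℕ) (θ : ℝ)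
    (hθ0 : 0 < θ) (hθπ : θ < Real.pi)
    (d t : Fin s → ℕ) (hd : StrictAnti d) (hdpos : ∀ ℓ, 1 ≤ d ℓ) (ht : ∀ ℓ, 1 ≤ t ℓ)
    (hsum : ∑ ℓ, t ℓ * d ℓ = n)
    (A : (Matrix (Fin n) (Fin n) (Quaternion ℝ))ˣ) (hA : qdet A.val = 1)
    (hconj : ∃ (e : ((p : (ℓ : Fin s) × Fin (t ℓ)) × Fin (d p.1)) ≃ Fin n)
        (S : (Matrix (Fin n) (Fin n) (Quaternion ℝ))ˣ),
        S.val * A.val * (S⁻¹).val =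
          (Matrix.reindex e e (Matrix.blockDiagonal' fun p : (ℓ : Fin s) × Fin (t ℓ) =>
            jordanC (Complex.exp (θ * Complex.I)) (d p.1))).map C2H) :
    (∃ g : (Matrix (Fin n) (Fin n) (Quaternion ℝ))ˣ,
        qdet g.val = 1 ∧ g * g = 1 ∧ g * A * g⁻¹ = A⁻¹) ↔
      ∀ ℓ, Even (t ℓ) := by
  obtain ⟨e, S, hS⟩ := hconj
  set lam := Complex.exp (θ * Complex.I) with hlam
  have hl : lam * (starRingEnd ℂ) lam = 1 := by
    rw [hlam, ← Complex.exp_conj, ← Complex.exp_add]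
    simp
  have hl2 : lam * lam ≠ 1 := by
    intro h
    have h1 : lam = (starRingEnd ℂ) lam := by
      calc lam = lam * (lam * (starRingEnd ℂ) lam) := by rw [hl, mul_one]
        _ = (lam * lam) * (starRingEnd ℂ) lam := by ring
        _ = (starRingEnd ℂ) lam := by rw [h, one_mul]
    have h2 := congrArg Complex.im h1
    rw [Complex.conj_im, hlam, Complex.exp_ofReal_mul_I_im] at h2
    have := Real.sin_pos_of_pos_of_lt_pi hθ0 hθπ
    linarith
  let D : ((ℓ : Fin s) × Fin (t ℓ)) → ℕ := fun p => d p.1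
  let J := JJ D lam
  let B : Matrix (Fin n) (Fin n) (Quaternion ℝ) := (J.submatrix e.symm e.symm).map C2H
  have hB : S.val * A.val * (S⁻¹).val = B := hS
  have hsub1 : ∀ H : Matrix (Fin n) (Fin n) (Quaternion ℝ),
      (B * H * B).submatrix e e = J.map C2H * H.submatrix e e * J.map C2H := by
    intro H
    have hBe : B.submatrix e e = J.map C2H := by
      ext i j <;> simp [B]
    rw [← hBe, Matrix.submatrix_mul_equiv, Matrix.submatrix_mul_equiv]
  constructor
  · rintro ⟨g, -, hgg, hgA⟩
    have hAgA : A * g * A = g := by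
      have h1 : g * A = A⁻¹ * g := mul_inv_eq_iff_eq_mul.1 hgA
      rw [mul_assoc, h1, mul_inv_cancel_left]
    let h : (Matrix (Fin n) (Fin n) (Quaternion ℝ))ˣ := S * g * S⁻¹
    have hBu : B = (S * A * S⁻¹).val := by rw [← hB]; simp
    have hBh : B * h.val * B = h.val := by
      rw [hBu, ← Units.val_mul, ← Units.val_mul]
      congr 1
      calc S * A * S⁻¹ * h * (S * A * S⁻¹) = S * (A * g * A) * S⁻¹ := by simp only [h]; group
        _ = h := by rw [hAgA]
    have hhh : h.val * h.val = 1 := by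
      rw [← Units.val_mul]
      have : h * h = S * (g * g) * S⁻¹ := by simp only [h]; group
      rw [this, hgg]; simp
    let H := h.val.submatrix e e
    have hH1 : J.map C2H * H * J.map C2H = H := by rw [← hsub1, hBh]
    have hH2 : H * H = 1 := by
      simp only [H]
      rw [Matrix.submatrix_mul_equiv, hhh, Matrix.submatrix_one_equiv]
    have hX : H.map qc1 = 0 := by
      apply X_eq_zero D lam hl2
      have := congrArg (fun K => Matrix.map K qc1) hH1
      simpa only [JHJ_qc1] using this
    have hY : J * H.map qc2 * mconj J = H.map qc2 := by
      have := congrArg (fun K => Matrix.map K qc2) hH1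
      simpa only [JHJ_qc2] using this
    have hYY : H.map qc2 * mconj (H.map qc2) = -1 := by
      have := congrArg (fun K => Matrix.map K qc1) hH2
      simp only [map_qc1_mul, hX, one_qc1] at this
      rw [← this]; simp
    apply even_of_second_diff s d t hd.injective hdpos
    intro k
    have := even_card_filt D lam hl (H.map qc2) hY hYY k
    rw [Fintype.sum_sigma] at this
    simpa [D] using this
  · intro hev
    obtain ⟨Y, hY1, hY2⟩ := exists_Y s d t hdpos hev lam hl
    let Yn := Y.submatrix e.symm e.symm
    let Jn := J.submatrix e.symm e.symm
    have hsc : ∀ F : Matrix ((p : (ℓ : Fin s) × Fin (t ℓ)) × Fin (d p.1))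
        ((p : (ℓ : Fin s) × Fin (t ℓ)) × Fin (d p.1)) ℂ,
        mconj (F.submatrix e.symm e.symm) = (mconj F).submatrix e.symm e.symm := fun F => rfl
    have hYn1 : Jn * Yn * mconj Jn = Yn := by
      have : J * Y * mconj J = Y := hY1
      simp only [Jn, Yn]
      rw [hsc, Matrix.submatrix_mul_equiv, Matrix.submatrix_mul_equiv, this]
    have hYn2 : Yn * mconj Yn = -1 := by
      simp only [Yn]
      rw [hsc, Matrix.submatrix_mul_equiv, hY2]
      ext i j
      simp [Matrix.one_apply]
    let G := Yn.map Cj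
    have hG1 : B * G * B = G := by
      apply qmat_ext
      · show (Jn.map C2H * G * Jn.map C2H).map qc1 = _
        rw [JHJ_qc1]; simp [-Matrix.map_map, G, map_Cj_qc1]
      · show (Jn.map C2H * G * Jn.map C2H).map qc2 = _
        rw [JHJ_qc2]; simp only [G, map_Cj_qc2, hYn1]
    have hG2 : G * G = 1 := by
      apply qmat_ext
      · simp [-Matrix.map_map, map_qc1_mul, G, map_Cj_qc1, map_Cj_qc2, one_qc1, hYn2]
      · simp [-Matrix.map_map, map_qc2_mul, G, map_Cj_qc1, map_Cj_qc2, one_qc2, mconj_zero]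
    have hGdet : qdet G = 1 := by
      rw [qdet, Phi_eq]
      simp only [G, map_Cj_qc1, map_Cj_qc2, mconj_zero]
      rw [det_skew, ← Matrix.det_mul, hYn2, Matrix.det_neg, Matrix.det_one, mul_one]
      exact (even_card_of_mconj Yn hYn2).neg_one_pow
    let h : (Matrix (Fin n) (Fin n) (Quaternion ℝ))ˣ := ⟨G, G, hG2, hG2⟩
    have hhh : h * h = 1 := Units.ext hG2
    have hBh : (S * A * S⁻¹) * h * (S * A * S⁻¹) = h := by
      apply Units.ext
      have : (S * A * S⁻¹).val = B := by rw [← hB]; simp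
      rw [Units.val_mul, Units.val_mul, this]
      exact hG1
    refine ⟨S⁻¹ * h * S, ?_, ?_, ?_⟩
    · have h1 : qdet (S⁻¹).val * qdet S.val = 1 := by
        rw [← qdet_mul, ← Units.val_mul, inv_mul_cancel, Units.val_one, qdet_one]
      rw [Units.val_mul, Units.val_mul, qdet_mul, qdet_mul]
      have : qdet h.val = 1 := hGdet
      rw [this, mul_one, h1]
    · calc S⁻¹ * h * S * (S⁻¹ * h * S) = S⁻¹ * (h * h) * S := by group
        _ = 1 := by rw [hhh]; group
    · rw [mul_inv_eq_iff_eq_mul, eq_inv_mul_iff_mul_eq]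
      calc A * (S⁻¹ * h * S * A) = S⁻¹ * ((S * A * S⁻¹) * h * (S * A * S⁻¹)) * S := by group
        _ = S⁻¹ * h * S := by rw [hBh]
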